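/- arXiv:1601.06475 — 3 statements merged into one kernel-verified Lean document; each statement's English description precedes it below -/
import Mathlib

section
/- Let s ≥ 2, t ≥ 0, n = 3s + t, k = 2s − 1 + t, and let l_1, …, l_n : ℂ^k → ℂ have every k of them linearly independent. Suppose that for some t-element subset T ⊆ {1, …, n}, the restrictions of the remaining 3s functionals l_r (r ∉ T) to the (2s−1)-dimensional subspace E = ⋂_{i∈T} ker l_i form a dependent collection. Then the discriminantal arrangement B(n, k) admits a codimension-2 stratum of multiplicity 3, i.e. there exist three pairwise distinct (k+1)-element subsets K_1, K_2, K_3 of {1, …, n} with |K_1 ∪ K_2 ∪ K_3| ≥ k + 3 such that D_{K_1} ∩ D_{K_2} ∩ D_{K_3} has codimension 2 in ℂ^n. -/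
open Module Submodule

/-- The subspace `D_J ⊆ ℂ^ι` of translation vectors `x` for which the translated
hyperplanes `{l i = x i}`, `i ∈ J`, have a common point. -/
noncomputable def DD {ι V : Type*} [AddCommGroup V] [Module ℂ V]
    (l : ι → Module.Dual ℂ V) (J : Finset ι) : Submodule ℂ (ι → ℂ) where
  carrier := {x | ∃ y : V, ∀ i ∈ J, x i = l i y}
  add_mem' := by
    rintro a b ⟨y, hy⟩ ⟨z, hz⟩
    exact ⟨y + z, fun i hi => by simp [hy i hi, hz i hi]⟩
  zero_mem' := ⟨0, fun i _ => by simp⟩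
  smul_mem' := by
    rintro c a ⟨y, hy⟩
    exact ⟨c • y, fun i hi => by simp [hy i hi]⟩

lemma exists_coeffs {ι V : Type*} [Fintype ι] [DecidableEq ι] [AddCommGroup V] [Module ℂ V]
    (l : ι → Module.Dual ℂ V) (S : Finset ι) (f : Module.Dual ℂ V)
    (h : (⨅ r ∈ S, LinearMap.ker (l r)) ≤ LinearMap.ker f) :
    ∃ c : ι → ℂ, (∀ i, i ∉ S → c i = 0) ∧ f = ∑ i, c i • l i := by
  have h1 : f ∈ Submodule.span ℂ (Set.range (fun i : S => l i.1)) := by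
    apply mem_span_of_iInf_ker_le_ker
    refine le_trans (le_iInf₂ fun r hr => ?_) h
    exact iInf_le (fun i : S => LinearMap.ker (l i.1)) ⟨r, hr⟩
  obtain ⟨c, hc⟩ := (Submodule.mem_span_range_iff_exists_fun ℂ).1 h1
  refine ⟨fun i => if hi : i ∈ S then c ⟨i, hi⟩ else 0, fun i hi => by simp [hi], ?_⟩
  rw [← hc, ← Finset.sum_subset (Finset.subset_univ S), ← Finset.sum_coe_sort S]
  · exact Finset.sum_congr rfl fun i _ => by simp
  · intro i _ hi
    simp [hi]

lemma exists_point {ι : Type*} {k : ℕ}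
    (l : ι → Module.Dual ℂ (Fin k → ℂ)) (S : Finset ι) (hS : S.card = k)
    (hli : LinearIndependent ℂ (fun i : S => l i.1)) (x : ι → ℂ) :
    ∃ y, ∀ i ∈ S, l i y = x i := by
  let L : (Fin k → ℂ) →ₗ[ℂ] (S → ℂ) := LinearMap.pi (fun i : S => l i.1)
  have hspan := hli.span_eq_top_of_card_eq_finrank' (by simp [hS, Subspace.dual_finrank_eq])
  have hinj : Function.Injective L := by
    rw [← LinearMap.ker_eq_bot, LinearMap.ker_eq_bot']
    intro y hy
    rw [← Module.forall_dual_apply_eq_zero_iff ℂ]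
    intro f
    have hf : f ∈ Submodule.span ℂ (Set.range (fun i : S => l i.1)) := by
      rw [hspan]; trivial
    obtain ⟨c, rfl⟩ := (Submodule.mem_span_range_iff_exists_fun ℂ).1 hf
    simp only [LinearMap.coe_sum, Finset.sum_apply, LinearMap.smul_apply]
    refine Finset.sum_eq_zero fun i _ => ?_
    have : l i.1 y = 0 := congrFun hy i
    simp [this]
  have hsurj := (LinearMap.injective_iff_surjective_of_finrank_eq_finrank (by simp [hS])).1 hinj
  obtain ⟨y, hy⟩ := hsurj (fun i => x i.1)
  exact ⟨y, fun i hi => congrFun hy ⟨i, hi⟩⟩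

lemma mem_DD_iff {ι : Type*} [Fintype ι] [DecidableEq ι] {k : ℕ}
    (l : ι → Module.Dual ℂ (Fin k → ℂ))
    (hgen : ∀ S : Finset ι, S.card = k → LinearIndependent ℂ (fun i : S => l i.1))
    (K : Finset ι) (hK : K.card = k + 1) (R : ι → ℂ) (hR : ∀ i, i ∉ K → R i = 0)
    (j : ι) (hj : R j ≠ 0) (hrel : ∑ i, R i • l i = 0) (x : ι → ℂ) :
    x ∈ DD l K ↔ ∑ i, R i * x i = 0 := by
  have hrel' : ∀ y, ∑ i, R i * l i y = 0 := fun y => by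
    simpa using congrArg (fun f : Module.Dual ℂ (Fin k → ℂ) => f y) hrel
  constructor
  · rintro ⟨y, hy⟩
    rw [← hrel' y]
    refine Finset.sum_congr rfl fun i _ => ?_
    by_cases hi : i ∈ K
    · rw [hy i hi]
    · simp [hR i hi]
  · intro h
    have hjK : j ∈ K := by
      by_contra h'
      exact hj (hR j h')
    have hc : (K.erase j).card = k := by rw [Finset.card_erase_of_mem hjK, hK]; rfl
    obtain ⟨y, hy⟩ := exists_point l (K.erase j) hc (hgen _ hc) x
    have hs : ∑ i, R i * (x i - l i y) = 0 := by
      simp only [mul_sub, Finset.sum_sub_distrib, h, hrel' y, sub_zero]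
    rw [Finset.sum_eq_single j] at hs
    · have hxj : x j = l j y := by
        rcases mul_eq_zero.1 hs with h0 | h0
        · exact absurd h0 hj
        · exact sub_eq_zero.1 h0
      refine ⟨y, fun i hi => ?_⟩
      by_cases hij : i = j
      · rw [hij, hxj]
      · exact (hy i (Finset.mem_erase.2 ⟨hij, hi⟩)).symm
    · intro i _ hij
      by_cases hi : i ∈ K
      · rw [hy i (Finset.mem_erase.2 ⟨hij, hi⟩)]; simp
      · simp [hR i hi]
    · intro h'; exact absurd (Finset.mem_univ j) h'

lemma finrank_two {ι : Type*} [Fintype ι] [DecidableEq ι] (R₁ R₂ : ι → ℂ) (j m : ι)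
    (h1j : R₁ j ≠ 0) (h1m : R₁ m = 0) (h2j : R₂ j = 0) (h2m : R₂ m ≠ 0)
    (W : Submodule ℂ (ι → ℂ))
    (hW : ∀ x, x ∈ W ↔ ∑ i, R₁ i * x i = 0 ∧ ∑ i, R₂ i * x i = 0) :
    Module.finrank ℂ W = Fintype.card ι - 2 := by
  let F : (ι → ℂ) →ₗ[ℂ] (ℂ × ℂ) :=
    LinearMap.prod (∑ i, R₁ i • LinearMap.proj i) (∑ i, R₂ i • LinearMap.proj i)
  have hF : ∀ x, F x = (∑ i, R₁ i * x i, ∑ i, R₂ i * x i) := fun x => by simp [F]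
  have hker : W = LinearMap.ker F := by
    ext x
    rw [hW, LinearMap.mem_ker, hF, Prod.mk_eq_zero]
  have hsurj : Function.Surjective F := by
    rintro ⟨u, v⟩
    refine ⟨Pi.single j (u / R₁ j) + Pi.single m (v / R₂ m), ?_⟩
    rw [hF]
    simp [mul_add, Finset.sum_add_distrib, Pi.single_apply, h1m, h2j, mul_div_cancel₀, h1j, h2m]
  have := LinearMap.finrank_range_add_finrank_ker F
  rw [LinearMap.range_eq_top.2 hsurj, finrank_top, Module.finrank_prod, Module.finrank_self,
    Module.finrank_fintype_fun_eq_card, ← hker] at this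
  omega

/-- Lemma `lem:rest`: if for some `t`-element set `T` the restrictions of the
remaining `3s` functionals to `E = ⋂_{i ∈ T} ker l_i` form a dependent collection (i.e. the
complement of `T` can be partitioned into three `s`-element groups whose corresponding
kernel-intersections in `E` span a proper subspace of `E`), then the discriminantal arrangement
`B(n, k)`, `n = 3s + t`, `k = 2s - 1 + t`, admits a codimension-2 stratum of multiplicity 3. -/
theorem stmt4 (s t : ℕ) (hs : 2 ≤ s)
    (l : Fin (3 * s + t) → Module.Dual ℂ (Fin (2 * s + t - 1) → ℂ))
    (hgen : ∀ S : Finset (Fin (3 * s + t)), S.card = 2 * s + t - 1 →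
      LinearIndependent ℂ (fun i : S => l i.1))
    (T : Finset (Fin (3 * s + t))) (hT : T.card = t)
    (E : Submodule ℂ (Fin (2 * s + t - 1) → ℂ)) (hE : E = ⨅ i ∈ T, LinearMap.ker (l i))
    (hdep : ∃ A B C : Finset (Fin (3 * s + t)),
      A.card = s ∧ B.card = s ∧ C.card = s ∧
      Disjoint A B ∧ Disjoint A C ∧ Disjoint B C ∧
      A ∪ B ∪ C = Tᶜ ∧
      (⨅ r ∈ A, LinearMap.ker ((l r).domRestrict E)) ⊔
        (⨅ r ∈ B, LinearMap.ker ((l r).domRestrict E)) ⊔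
        (⨅ r ∈ C, LinearMap.ker ((l r).domRestrict E)) ≠ ⊤) :
    ∃ K₁ K₂ K₃ : Finset (Fin (3 * s + t)),
      K₁ ≠ K₂ ∧ K₁ ≠ K₃ ∧ K₂ ≠ K₃ ∧
      K₁.card = (2 * s + t - 1) + 1 ∧ K₂.card = (2 * s + t - 1) + 1 ∧
      K₃.card = (2 * s + t - 1) + 1 ∧
      (2 * s + t - 1) + 3 ≤ (K₁ ∪ K₂ ∪ K₃).card ∧
      Module.finrank ℂ ↥(DD l K₁ ⊓ DD l K₂ ⊓ DD l K₃) = 3 * s + t - 2 := by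
  obtain ⟨A, B, C, hA, hB, hC, hAB, hAC, hBC, hU, hne⟩ := hdep
  have hmem : ∀ i, (i ∈ A ∨ i ∈ B ∨ i ∈ C) ↔ i ∉ T := fun i => by
    rw [← Finset.mem_compl, ← hU]; simp [or_assoc]
  have hTA : Disjoint T A := Finset.disjoint_left.2 fun i h h' => (hmem i).1 (Or.inl h') h
  have hTB : Disjoint T B :=
    Finset.disjoint_left.2 fun i h h' => (hmem i).1 (Or.inr (Or.inl h')) h
  have hTC : Disjoint T C :=
    Finset.disjoint_left.2 fun i h h' => (hmem i).1 (Or.inr (Or.inr h')) h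
  have hcard : ∀ X Y : Finset (Fin (3 * s + t)), Disjoint T X → Disjoint T Y → Disjoint X Y →
      X.card = s → Y.card = s → (T ∪ X ∪ Y).card = (2 * s + t - 1) + 1 := by
    intro X Y h1 h2 h3 h4 h5
    rw [Finset.card_union_of_disjoint (Finset.disjoint_union_left.2 ⟨h2, h3⟩),
      Finset.card_union_of_disjoint h1]
    omega
  -- the functional on `E`
  obtain ⟨g, hg0, hg⟩ := Submodule.exists_le_ker_of_lt_top _ (lt_top_iff_ne_top.2 hne)
  obtain ⟨a, ha0, ha⟩ := exists_coeffs (fun r => (l r).domRestrict E) A g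
    ((le_sup_left.trans le_sup_left).trans hg)
  obtain ⟨b, hb0, hb⟩ := exists_coeffs (fun r => (l r).domRestrict E) B g
    ((le_sup_right.trans le_sup_left).trans hg)
  obtain ⟨c, hc0, hc⟩ := exists_coeffs (fun r => (l r).domRestrict E) C g
    (le_sup_right.trans hg)
  have hnz : ∀ d : Fin (3 * s + t) → ℂ, g = ∑ i, d i • (l i).domRestrict E → ∃ i, d i ≠ 0 := by
    intro d hd
    by_contra! h
    exact hg0 (by rw [hd]; simp [h])
  have hext : ∀ d e : Fin (3 * s + t) → ℂ, g = ∑ i, d i • (l i).domRestrict E →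
      g = ∑ i, e i • (l i).domRestrict E → ∃ τ : Fin (3 * s + t) → ℂ,
        (∀ i, i ∉ T → τ i = 0) ∧ ∑ i, (d i - e i - τ i) • l i = 0 := by
    intro d e hd he
    obtain ⟨τ, hτ, hτ'⟩ := exists_coeffs l T (∑ i, d i • l i - ∑ i, e i • l i) (by
      rw [← hE]
      intro y hy
      have h1 := congrArg (fun f : Module.Dual ℂ E => f ⟨y, hy⟩) (hd.symm.trans he)
      simp at h1
      simp [LinearMap.mem_ker, h1])
    refine ⟨τ, hτ, ?_⟩
    simp only [sub_smul, Finset.sum_sub_distrib]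
    rw [← hτ', sub_self]
  obtain ⟨σ, hσ, hr1⟩ := hext a b ha hb
  obtain ⟨τ, hτ, hr2⟩ := hext a c ha hc
  obtain ⟨j, hj⟩ := hnz b hb
  obtain ⟨m, hm⟩ := hnz c hc
  have hjB : j ∈ B := by
    by_contra h
    exact hj (hb0 j h)
  have hmC : m ∈ C := by
    by_contra h
    exact hm (hc0 m h)
  have hjA : j ∉ A := fun h => Finset.disjoint_left.1 hAB h hjB
  have hjC : j ∉ C := fun h => Finset.disjoint_left.1 hBC hjB h
  have hjT : j ∉ T := fun h => Finset.disjoint_left.1 hTB h hjB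
  have hmA : m ∉ A := fun h => Finset.disjoint_left.1 hAC h hmC
  have hmB : m ∉ B := fun h => Finset.disjoint_left.1 hBC h hmC
  have hmT : m ∉ T := fun h => Finset.disjoint_left.1 hTC h hmC
  have hr3 : ∑ i, ((a i - c i - τ i) - (a i - b i - σ i)) • l i = 0 := by
    simp only [sub_smul _ (_ - _ - _ : ℂ)]
    rw [Finset.sum_sub_distrib, hr1, hr2, sub_zero]
  have hK1 := hcard A B hTA hTB hAB hA hB
  have hK2 := hcard A C hTA hTC hAC hA hC
  have hK3 := hcard B C hTB hTC hBC hB hC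
  have m1 := mem_DD_iff l hgen (T ∪ A ∪ B) hK1 (fun i => a i - b i - σ i)
    (fun i hi => by
      simp only [Finset.mem_union, not_or] at hi
      simp [ha0 i hi.1.2, hb0 i hi.2, hσ i hi.1.1]) j
    (by simp [ha0 j hjA, hσ j hjT, hj]) hr1
  have m2 := mem_DD_iff l hgen (T ∪ A ∪ C) hK2 (fun i => a i - c i - τ i)
    (fun i hi => by
      simp only [Finset.mem_union, not_or] at hi
      simp [ha0 i hi.1.2, hc0 i hi.2, hτ i hi.1.1]) m
    (by simp [ha0 m hmA, hτ m hmT, hm]) hr2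
  have m3 := mem_DD_iff l hgen (T ∪ B ∪ C) hK3
    (fun i => (a i - c i - τ i) - (a i - b i - σ i))
    (fun i hi => by
      simp only [Finset.mem_union, not_or] at hi
      simp [hb0 i hi.1.2, hc0 i hi.2, hτ i hi.1.1, hσ i hi.1.1]) j
    (by simp [ha0 j hjA, hσ j hjT, hτ j hjT, hc0 j hjC, hj]) hr3
  obtain ⟨p, hp⟩ : A.Nonempty := Finset.card_pos.1 (by omega)
  have hpB : p ∉ B := fun h => Finset.disjoint_left.1 hAB hp h
  have hpC : p ∉ C := fun h => Finset.disjoint_left.1 hAC hp h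
  have hpT : p ∉ T := fun h => Finset.disjoint_left.1 hTA h hp
  refine ⟨T ∪ A ∪ B, T ∪ A ∪ C, T ∪ B ∪ C, ?_, ?_, ?_, hK1, hK2, hK3, ?_, ?_⟩
  · intro h
    have := Finset.ext_iff.1 h j
    simp [hjA, hjB, hjC, hjT] at this
  · intro h
    have := Finset.ext_iff.1 h p
    simp [hp, hpB, hpC, hpT] at this
  · intro h
    have := Finset.ext_iff.1 h p
    simp [hp, hpB, hpC, hpT] at this
  · have : T ∪ A ∪ B ∪ (T ∪ A ∪ C) ∪ (T ∪ B ∪ C) = Finset.univ := by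
      ext i
      have := hmem i
      simp only [Finset.mem_union, Finset.mem_univ, iff_true]
      tauto
    rw [this, Finset.card_univ, Fintype.card_fin]
    omega
  · rw [finrank_two (fun i => a i - b i - σ i) (fun i => a i - c i - τ i) j m
      (by simp [ha0 j hjA, hσ j hjT, hj]) (by simp [ha0 m hmA, hb0 m hmB, hσ m hmT])
      (by simp [ha0 j hjA, hc0 j hjC, hτ j hjT]) (by simp [ha0 m hmA, hτ m hmT, hm]),
      Fintype.card_fin]
    intro x
    rw [Submodule.mem_inf, Submodule.mem_inf, m1, m2, m3]
    constructor
    · exact fun h => h.1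
    · intro h
      refine ⟨h, ?_⟩
      simp only [sub_mul _ (_ - _ - _ : ℂ)]
      rw [Finset.sum_sub_distrib, h.1, h.2, sub_zero]
end

section
/- Assume 2n > 3(k + 1) and suppose the discriminantal arrangement B(n, k) admits a codimension-2 stratum of multiplicity 3, i.e. there are three pairwise distinct (k+1)-element subsets K_1, K_2, K_3 of {1, …, n} with |K_1 ∪ K_2 ∪ K_3| ≥ k + 3 such that D_{K_1} ∩ D_{K_2} ∩ D_{K_3} has codimension 2. Then there exists a proper subset S ⊊ {1, …, n} such that the discriminantal arrangement of the subfamily (l_i)_{i∈S} (defined in ℂ^S) also admits a codimension-2 stratum of multiplicity 3. -/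
open Module Submodule

theorem aux_single_notMem {k n : ℕ}
    (l : Fin n → Module.Dual ℂ (Fin k → ℂ))
    (hgen : ∀ S : Finset (Fin n), S.card = k → LinearIndependent ℂ (fun i : S => l i.1))
    (K : Finset (Fin n)) (hK : K.card = k + 1) (i : Fin n) (hi : i ∈ K) :
    (Pi.single i 1 : Fin n → ℂ) ∉ DD l K := by
  rintro ⟨y, hy⟩
  have hc : (K.erase i).card = k := by rw [Finset.card_erase_of_mem hi, hK]; rfl
  have hli := hgen _ hc
  have hsp := hli.span_eq_top_of_card_eq_finrank' (by
    rw [Subspace.dual_finrank_eq, Module.finrank_fin_fun, Fintype.card_coe, hc])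
  have hmem : l i ∈ Submodule.span ℂ (Set.range (fun j : (K.erase i : Finset (Fin n)) => l j.1)) := by
    rw [hsp]; trivial
  have hle : Submodule.span ℂ (Set.range (fun j : (K.erase i : Finset (Fin n)) => l j.1)) ≤
      LinearMap.ker (Module.Dual.eval ℂ (Fin k → ℂ) y) := by
    rw [Submodule.span_le]
    rintro _ ⟨j, rfl⟩
    have h1 := hy j.1 (Finset.mem_of_mem_erase j.2)
    rw [Pi.single_eq_of_ne (Finset.ne_of_mem_erase j.2)] at h1
    simp [Module.Dual.eval_apply, ← h1]
  have h0 : l i y = 0 := by simpa using hle hmem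
  have h1 := hy i hi
  rw [h0] at h1
  simp at h1

theorem aux_single_mem {k n : ℕ}
    (l : Fin n → Module.Dual ℂ (Fin k → ℂ))
    (K : Finset (Fin n)) (i : Fin n) (hi : i ∉ K) :
    (Pi.single i 1 : Fin n → ℂ) ∈ DD l K := by
  refine ⟨0, fun j hj => ?_⟩
  rw [Pi.single_eq_of_ne (by rintro rfl; exact hi hj)]
  simp

theorem aux_cover {k n : ℕ}
    (l : Fin n → Module.Dual ℂ (Fin k → ℂ))
    (hgen : ∀ S : Finset (Fin n), S.card = k → LinearIndependent ℂ (fun i : S => l i.1))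
    (K₁ K₂ K₃ : Finset (Fin n)) (h23 : K₂ ≠ K₃)
    (h1 : K₁.card = k + 1) (h2 : K₂.card = k + 1) (h3 : K₃.card = k + 1)
    (hf : n - 2 ≤ Module.finrank ℂ ↥(DD l K₁ ⊓ (DD l K₂ ⊓ DD l K₃)))
    (i : Fin n) (hi : i ∈ K₁) : i ∈ K₂ ∨ i ∈ K₃ := by
  by_contra! hcon
  have e1 : DD l K₁ ⊓ (DD l K₂ ⊓ DD l K₃) < DD l K₂ ⊓ DD l K₃ := by
    refine lt_of_le_of_ne inf_le_right fun he => ?_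
    have hm : (Pi.single i 1 : Fin n → ℂ) ∈ DD l K₂ ⊓ DD l K₃ :=
      ⟨aux_single_mem l _ i hcon.1, aux_single_mem l _ i hcon.2⟩
    rw [← he] at hm
    exact aux_single_notMem l hgen K₁ h1 i hi hm.1
  have e2 : DD l K₂ ⊓ DD l K₃ < DD l K₂ := by
    obtain ⟨j, hj3, hj2⟩ : ∃ j ∈ K₃, j ∉ K₂ := by
      by_contra! hs
      exact h23 (Finset.eq_of_subset_of_card_le hs (by omega)).symm
    refine lt_of_le_of_ne inf_le_left fun he => ?_
    have hm := aux_single_mem l K₂ j hj2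
    rw [← he] at hm
    exact aux_single_notMem l hgen K₃ h3 j hj3 hm.2
  have e3 : DD l K₂ < ⊤ := by
    obtain ⟨j, hj⟩ : K₂.Nonempty := Finset.card_pos.mp (by omega)
    refine lt_of_le_of_ne le_top fun he => ?_
    exact aux_single_notMem l hgen K₂ h2 j hj (by rw [he]; trivial)
  have f1 := Submodule.finrank_lt_finrank_of_lt e1
  have f2 := Submodule.finrank_lt_finrank_of_lt e2
  have f3 := Submodule.finrank_lt_finrank_of_lt e3
  rw [finrank_top, Module.finrank_fin_fun] at f3
  omega

theorem aux_finrank {k n : ℕ}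
    (l : Fin n → Module.Dual ℂ (Fin k → ℂ)) (S K₁ K₂ K₃ : Finset (Fin n))
    (h1 : K₁ ⊆ S) (h2 : K₂ ⊆ S) (h3 : K₃ ⊆ S) :
    Module.finrank ℂ ↥(DD l K₁ ⊓ DD l K₂ ⊓ DD l K₃) + S.card =
    Module.finrank ℂ
          ↥(DD (fun i : ↥S => l i.1) (K₁.subtype (· ∈ S)) ⊓
            DD (fun i : ↥S => l i.1) (K₂.subtype (· ∈ S)) ⊓
            DD (fun i : ↥S => l i.1) (K₃.subtype (· ∈ S))) + n := by
  set W := DD (fun i : ↥S => l i.1) (K₁.subtype (· ∈ S)) ⊓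
            DD (fun i : ↥S => l i.1) (K₂.subtype (· ∈ S)) ⊓
            DD (fun i : ↥S => l i.1) (K₃.subtype (· ∈ S)) with hW
  let π : (Fin n → ℂ) →ₗ[ℂ] (S → ℂ) := LinearMap.funLeft ℂ ℂ (fun i : S => i.1)
  have hπ : Function.Surjective π :=
    LinearMap.funLeft_surjective_of_injective ℂ ℂ _ Subtype.val_injective
  have hD : ∀ K : Finset (Fin n), K ⊆ S →
      DD l K = (DD (fun i : ↥S => l i.1) (K.subtype (· ∈ S))).comap π := by
    intro K hK
    ext x
    constructor
    · rintro ⟨y, hy⟩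
      exact ⟨y, fun i hi => hy i.1 (Finset.mem_subtype.mp hi)⟩
    · rintro ⟨y, hy⟩
      exact ⟨y, fun i hi => hy ⟨i, hK hi⟩ (Finset.mem_subtype.mpr hi)⟩
  have hcomap : DD l K₁ ⊓ DD l K₂ ⊓ DD l K₃ = W.comap π := by
    rw [hD _ h1, hD _ h2, hD _ h3, hW]; rfl
  rw [hcomap]
  have a := LinearMap.finrank_range_add_finrank_ker (W.mkQ ∘ₗ π)
  have hr : LinearMap.range (W.mkQ ∘ₗ π) = ⊤ :=
    LinearMap.range_eq_top.mpr ((Submodule.mkQ_surjective W).comp hπ)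
  rw [hr, finrank_top, LinearMap.ker_comp, Submodule.ker_mkQ, Module.finrank_fin_fun] at a
  have b := Submodule.finrank_quotient_add_finrank W
  rw [Module.finrank_fintype_fun_eq_card, Fintype.card_coe] at b
  omega

/-- if `2n > 3(k+1)` and `B(n,k)` admits a codimension-2 stratum of
multiplicity 3, then some proper subfamily `(l i)_{i ∈ S}`, `S ⊊ {1,…,n}`, has a
discriminantal arrangement (in `ℂ^S`) admitting a codimension-2 stratum of multiplicity 3. -/
theorem stmt10 (k n : ℕ) (hk : 0 < k) (hkn : k < n) (hbig : 3 * (k + 1) < 2 * n)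
    (l : Fin n → Module.Dual ℂ (Fin k → ℂ))
    (hgen : ∀ S : Finset (Fin n), S.card = k → LinearIndependent ℂ (fun i : S => l i.1))
    (hmult3 : ∃ K₁ K₂ K₃ : Finset (Fin n),
      K₁ ≠ K₂ ∧ K₁ ≠ K₃ ∧ K₂ ≠ K₃ ∧
      K₁.card = k + 1 ∧ K₂.card = k + 1 ∧ K₃.card = k + 1 ∧
      k + 3 ≤ (K₁ ∪ K₂ ∪ K₃).card ∧
      Module.finrank ℂ ↥(DD l K₁ ⊓ DD l K₂ ⊓ DD l K₃) = n - 2) :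
    ∃ S : Finset (Fin n), S ≠ Finset.univ ∧
      ∃ K₁ K₂ K₃ : Finset ↥S,
        K₁ ≠ K₂ ∧ K₁ ≠ K₃ ∧ K₂ ≠ K₃ ∧
        K₁.card = k + 1 ∧ K₂.card = k + 1 ∧ K₃.card = k + 1 ∧
        k + 3 ≤ (K₁ ∪ K₂ ∪ K₃).card ∧
        Module.finrank ℂ
          ↥(DD (fun i : ↥S => l i.1) K₁ ⊓ DD (fun i : ↥S => l i.1) K₂ ⊓
            DD (fun i : ↥S => l i.1) K₃) = S.card - 2 := by
  obtain ⟨K₁, K₂, K₃, h12, h13, h23, c1, c2, c3, hu, hf⟩ := hmult3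
  have s1 : K₁ ⊆ K₁ ∪ K₂ ∪ K₃ := fun x hx => by simp [hx]
  have s2 : K₂ ⊆ K₁ ∪ K₂ ∪ K₃ := fun x hx => by simp [hx]
  have s3 : K₃ ⊆ K₁ ∪ K₂ ∪ K₃ := fun x hx => by simp [hx]
  have hfr := aux_finrank l _ K₁ K₂ K₃ s1 s2 s3
  have hmap : ∀ K : Finset (Fin n), K ⊆ K₁ ∪ K₂ ∪ K₃ →
      (K.subtype (· ∈ K₁ ∪ K₂ ∪ K₃)).map (Function.Embedding.subtype _) = K :=
    fun K hK => Finset.subtype_map_of_mem hK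
  have hcard : ∀ K : Finset (Fin n), K ⊆ K₁ ∪ K₂ ∪ K₃ →
      (K.subtype (· ∈ K₁ ∪ K₂ ∪ K₃)).card = K.card := fun K hK => by
    rw [← Finset.card_map (Function.Embedding.subtype _), hmap K hK]
  have hinj : ∀ K L : Finset (Fin n), K ⊆ K₁ ∪ K₂ ∪ K₃ → L ⊆ K₁ ∪ K₂ ∪ K₃ → K ≠ L →
      K.subtype (· ∈ K₁ ∪ K₂ ∪ K₃) ≠ L.subtype (· ∈ K₁ ∪ K₂ ∪ K₃) := by
    intro K L hK hL hne he
    exact hne (by rw [← hmap K hK, he, hmap L hL])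
  have hn : (K₁ ∪ K₂ ∪ K₃).card ≤ n := by simpa using Finset.card_le_univ (K₁ ∪ K₂ ∪ K₃)
  refine ⟨K₁ ∪ K₂ ∪ K₃, ?_, K₁.subtype _, K₂.subtype _, K₃.subtype _,
    hinj _ _ s1 s2 h12, hinj _ _ s1 s3 h13, hinj _ _ s2 s3 h23,
    (hcard _ s1).trans c1, (hcard _ s2).trans c2, (hcard _ s3).trans c3, ?_, ?_⟩
  · intro huniv
    have k1 := aux_cover l hgen K₁ K₂ K₃ h23 c1 c2 c3 (by rw [← inf_assoc, hf])
    have k2 := aux_cover l hgen K₂ K₁ K₃ h13 c2 c1 c3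
      (by rw [← inf_assoc, inf_comm (DD l K₂), hf])
    have k3 := aux_cover l hgen K₃ K₁ K₂ h12 c3 c1 c2 (by rw [inf_comm, hf])
    have hsum : ∑ i : Fin n, 2 ≤ ∑ i : Fin n,
        ((if i ∈ K₁ then 1 else 0) + (if i ∈ K₂ then 1 else 0) + (if i ∈ K₃ then 1 else 0)) := by
      refine Finset.sum_le_sum fun i _ => ?_
      have hi : i ∈ K₁ ∪ K₂ ∪ K₃ := by rw [huniv]; exact Finset.mem_univ i
      have := k1 i
      have := k2 i
      have := k3 i
      simp only [Finset.mem_union] at hi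
      by_cases a1 : i ∈ K₁ <;> by_cases a2 : i ∈ K₂ <;> by_cases a3 : i ∈ K₃ <;> simp_all
    simp [Finset.sum_add_distrib, c1, c2, c3] at hsum
    omega
  · have : K₁.subtype (· ∈ K₁ ∪ K₂ ∪ K₃) ∪ K₂.subtype (· ∈ K₁ ∪ K₂ ∪ K₃) ∪
        K₃.subtype (· ∈ K₁ ∪ K₂ ∪ K₃) = (K₁ ∪ K₂ ∪ K₃).subtype (· ∈ K₁ ∪ K₂ ∪ K₃) := by
      ext x; simp only [Finset.mem_union, Finset.mem_subtype]
    rw [this, hcard _ (Finset.Subset.refl _)]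
    exact hu
  · omega
end

section
/- Let J_1, …, J_p be subsets of {1, …, n}, each of cardinality at least 3, with |J_i ∩ J_j| ≤ 1 for all i ≠ j. Define: C_1 = the set of indices s ∈ {1, …, n} belonging to at least two of the J_i; C_2 = the set of i ∈ {1, …, p} with J_i ∩ J_j = ∅ for all j ≠ i; C_3 = {1, …, n} ∖ (J_1 ∪ … ∪ J_p); Σ = the number of i ∈ {1, …, p} with |J_i ∩ C_1| = 1; and let i_1, …, i_q be the indices i with |J_i ∩ C_1| ≥ 3, with L_t = J_{i_t} ∩ C_1. Then dim(D_{J_1} ∩ … ∩ D_{J_p}) = d + Σ + 2·|C_2| + |C_3|, where d denotes the dimension of ⋂_{t=1}^q D_{L_t} computed inside ℂ^{C_1} (the space of translates of the lines with indices in C_1, with the D_{L_t} defined via the functionals (l_s)_{s∈C_1}), and d = |C_1| when q = 0. -/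
open Module Submodule

open Finset in
theorem pick_two {α : Type*} [DecidableEq α] (J C : Finset α) (hJ : 3 ≤ J.card) :
    ∃ a b, a ∈ J ∧ b ∈ J ∧ a ≠ b ∧
      ((J ∩ C).card ≤ 2 → ∀ s ∈ J, s ∈ C → s = a ∨ s = b) ∧
      (2 ≤ (J ∩ C).card → a ∈ C ∧ b ∈ C) := by
  rcases Nat.lt_or_ge (J ∩ C).card 2 with h | h
  · rcases Nat.lt_or_ge (J ∩ C).card 1 with h0 | h1
    · have h0' : J ∩ C = ∅ := by
        rw [← Finset.card_eq_zero]; omega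
      obtain ⟨a, ha, b, hb, hab⟩ := Finset.one_lt_card.1 (show 1 < J.card by omega)
      refine ⟨a, b, ha, hb, hab, ?_, by omega⟩
      intro _ s hs hsC
      have : s ∈ J ∩ C := Finset.mem_inter.2 ⟨hs, hsC⟩
      simp [h0'] at this
    · obtain ⟨a, ha⟩ := Finset.card_eq_one.1 (show (J ∩ C).card = 1 by omega)
      have haJ : a ∈ J ∩ C := by simp [ha]
      have haJ' := (Finset.mem_inter.1 haJ).1
      obtain ⟨b, hb, hab⟩ := Finset.exists_mem_ne (show 1 < J.card by omega) a
      refine ⟨a, b, haJ', hb, hab.symm, ?_, by omega⟩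
      intro _ s hs hsC
      have : s ∈ J ∩ C := Finset.mem_inter.2 ⟨hs, hsC⟩
      left
      simpa [ha] using this
  · obtain ⟨a, ha, b, hb, hab⟩ := Finset.one_lt_card.1 (show 1 < (J ∩ C).card by omega)
    refine ⟨a, b, (Finset.mem_inter.1 ha).1, (Finset.mem_inter.1 hb).1, hab, ?_, fun _ =>
      ⟨(Finset.mem_inter.1 ha).2, (Finset.mem_inter.1 hb).2⟩⟩
    intro h2 s hs hsC
    have hsub : ({a, b} : Finset α) ⊆ J ∩ C := by
      intro x hx
      simp only [Finset.mem_insert, Finset.mem_singleton] at hx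
      rcases hx with rfl | rfl <;> assumption
    have heq := Finset.eq_of_subset_of_card_le hsub (by rw [Finset.card_pair hab]; exact h2)
    have : s ∈ J ∩ C := Finset.mem_inter.2 ⟨hs, hsC⟩
    rw [← heq] at this
    simpa using this

theorem card_pair_sdiff {α : Type*} [DecidableEq α] (J C : Finset α) (a b : α)
    (ha : a ∈ J) (hb : b ∈ J) (hab : a ≠ b)
    (h1 : (J ∩ C).card ≤ 2 → ∀ s ∈ J, s ∈ C → s = a ∨ s = b)
    (h2 : 2 ≤ (J ∩ C).card → a ∈ C ∧ b ∈ C) :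
    (({a, b} : Finset α) \ C).card
      = (if (J ∩ C).card = 1 then 1 else 0) + 2 * (if J ∩ C = ∅ then 1 else 0) := by
  have key := Finset.card_sdiff_add_card_inter ({a, b} : Finset α) C
  rw [Finset.card_pair hab] at key
  have e0 : J ∩ C = ∅ ↔ (J ∩ C).card = 0 := Finset.card_eq_zero.symm
  simp only [e0]
  rcases Nat.lt_or_ge (J ∩ C).card 2 with h | h
  · have : ({a, b} : Finset α) ∩ C = J ∩ C := by
      ext s
      simp only [Finset.mem_inter, Finset.mem_insert, Finset.mem_singleton]
      constructor
      · rintro ⟨rfl | rfl, hs⟩ <;> exact ⟨by assumption, hs⟩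
      · rintro ⟨hs, hsC⟩
        exact ⟨h1 (by omega) s hs hsC, hsC⟩
    rw [this] at key
    split_ifs <;> omega
  · obtain ⟨haC, hbC⟩ := h2 h
    have : ({a, b} : Finset α) \ C = ∅ := by
      rw [Finset.sdiff_eq_empty_iff_subset]
      intro x hx
      simp only [Finset.mem_insert, Finset.mem_singleton] at hx
      rcases hx with rfl | rfl <;> assumption
    rw [this, Finset.card_empty, if_neg (by omega), if_neg (by omega)]

theorem pair_inj (f g : Module.Dual ℂ (Fin 2 → ℂ)) (h : LinearIndependent ℂ ![f, g])
    (y z : Fin 2 → ℂ) (hf : f y = f z) (hg : g y = g z) : y = z := by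
  have htop := h.span_eq_top_of_card_eq_finrank (by simp)
  rw [← sub_eq_zero, ← Module.forall_dual_apply_eq_zero_iff ℂ]
  intro φ
  have hφ : φ ∈ Submodule.span ℂ (Set.range ![f, g]) := by rw [htop]; trivial
  induction hφ using Submodule.span_induction with
  | mem x hx =>
    obtain ⟨i, rfl⟩ := hx
    fin_cases i <;> simp [hf, hg]
  | zero => simp
  | add x y _ _ hx hy => rw [LinearMap.add_apply, hx, hy, add_zero]
  | smul c x _ hx => rw [LinearMap.smul_apply, hx, smul_zero]

theorem pair_surj (f g : Module.Dual ℂ (Fin 2 → ℂ)) (h : LinearIndependent ℂ ![f, g])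
    (u v : ℂ) : ∃ y, f y = u ∧ g y = v := by
  let M : (Fin 2 → ℂ) →ₗ[ℂ] (Fin 2 → ℂ) := LinearMap.pi ![f, g]
  have hM : Function.Injective M := by
    intro y z hyz
    exact pair_inj f g h y z (congrFun hyz 0) (congrFun hyz 1)
  obtain ⟨y, hy⟩ := LinearMap.injective_iff_surjective.1 hM ![u, v]
  exact ⟨y, congrFun hy 0, congrFun hy 1⟩

theorem mem_DD {ι V : Type*} [AddCommGroup V] [Module ℂ V]
    (l : ι → Module.Dual ℂ V) (J : Finset ι) (x : ι → ℂ) :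
    x ∈ DD l J ↔ ∃ y : V, ∀ i ∈ J, x i = l i y := Iff.rfl

/-- Lemma `intersectionone`: for `J₁, …, J_p` of cardinality `≥ 3` with
pairwise intersections of cardinality `≤ 1`, with `C₁` the indices lying in at least two of
the `Jᵢ`, `C₂` the set of `i` with `Jᵢ` disjoint from all other `Jⱼ`, `C₃` the indices outside
all `Jᵢ`, `Σ` the number of `i` with `|Jᵢ ∩ C₁| = 1`, and `d` the dimension, inside `ℂ^{C₁}`,
of `⋂_{i : |Jᵢ ∩ C₁| ≥ 3} D_{Jᵢ ∩ C₁}` (equal to `|C₁|` when there is no such `i`, the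
infimum over the empty family being everything), one has
`dim (D_{J₁} ∩ … ∩ D_{J_p}) = d + Σ + 2|C₂| + |C₃|`. -/
theorem stmt16 (n : ℕ) (hn : 3 ≤ n)
    (l : Fin n → Module.Dual ℂ (Fin 2 → ℂ))
    (hgen : ∀ i j : Fin n, i ≠ j → LinearIndependent ℂ ![l i, l j])
    (p : ℕ) (J : Fin p → Finset (Fin n)) (hJ : ∀ i, 3 ≤ (J i).card)
    (hint : ∀ i j, i ≠ j → (J i ∩ J j).card ≤ 1)
    (C₁ : Finset (Fin n))
    (hC₁ : C₁ = Finset.univ.filter fun s => ∃ i j : Fin p, i ≠ j ∧ s ∈ J i ∧ s ∈ J j)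
    (C₂ : Finset (Fin p))
    (hC₂ : C₂ = Finset.univ.filter fun i => ∀ j, j ≠ i → J i ∩ J j = ∅)
    (C₃ : Finset (Fin n))
    (hC₃ : C₃ = Finset.univ.filter fun s => ∀ i, s ∉ J i)
    (Sg : ℕ) (hSg : Sg = (Finset.univ.filter fun i => (J i ∩ C₁).card = 1).card)
    (Q : Finset (Fin p)) (hQ : Q = Finset.univ.filter fun i => 3 ≤ (J i ∩ C₁).card)
    (d : ℕ)
    (hd : d = Module.finrank ℂ
      ↥(⨅ i ∈ Q, DD (fun s : ↥C₁ => l s.1) (Finset.subtype (· ∈ C₁) (J i ∩ C₁)))) :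
    Module.finrank ℂ ↥(⨅ i, DD l (J i)) = d + Sg + 2 * C₂.card + C₃.card := by
  classical
  choose a b haJ hbJ hab hK1 hK2 using fun i => pick_two (J i) C₁ (hJ i)
  have huniq : ∀ i j s, s ∈ J i → s ∈ J j → s ∉ C₁ → i = j := by
    intro i j s hi hj hs
    by_contra hne
    exact hs (by rw [hC₁]; simp only [Finset.mem_filter, Finset.mem_univ, true_and]
                 exact ⟨i, j, hne, hi, hj⟩)
  let T : Finset (Fin n) :=
    Finset.univ.filter fun s => s ∉ C₁ ∧ ∀ i, s ∈ J i → s = a i ∨ s = b i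
  have hmT : ∀ s, s ∈ T ↔ s ∉ C₁ ∧ ∀ i, s ∈ J i → s = a i ∨ s = b i := by
    intro s; simp [T]
  -- cardinality of `T`
  have hT : T = C₃ ∪ Finset.univ.biUnion (fun i => ({a i, b i} : Finset (Fin n)) \ C₁) := by
    ext s
    rw [hmT]
    simp only [hC₃, Finset.mem_union, Finset.mem_filter, Finset.mem_univ, true_and,
      Finset.mem_biUnion, Finset.mem_sdiff, Finset.mem_insert, Finset.mem_singleton]
    constructor
    · rintro ⟨h1, h2⟩
      by_cases h : ∀ i, s ∉ J i
      · exact Or.inl h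
      · push Not at h
        obtain ⟨i, hi⟩ := h
        exact Or.inr ⟨i, h2 i hi, h1⟩
    · rintro (h | ⟨i, h, hs⟩)
      · refine ⟨?_, fun i hi => absurd hi (h i)⟩
        rw [hC₁]
        simp only [Finset.mem_filter, Finset.mem_univ, true_and]
        rintro ⟨i, j, _, hi, _⟩
        exact h i hi
      · refine ⟨hs, fun j hj => ?_⟩
        have hi : s ∈ J i := by
          rcases h with rfl | rfl
          exacts [haJ i, hbJ i]
        obtain rfl := huniq i j s hi hj hs
        exact h
  have hpJ : ∀ i s, s ∈ ({a i, b i} : Finset (Fin n)) \ C₁ → s ∈ J i ∧ s ∉ C₁ := by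
    intro i s hs
    simp only [Finset.mem_sdiff, Finset.mem_insert, Finset.mem_singleton] at hs
    refine ⟨?_, hs.2⟩
    rcases hs.1 with rfl | rfl
    exacts [haJ i, hbJ i]
  have hC2' : ∀ i, J i ∩ C₁ = ∅ ↔ i ∈ C₂ := by
    intro i
    rw [hC₂]
    simp only [Finset.mem_filter, Finset.mem_univ, true_and]
    constructor
    · intro h j hj
      rw [Finset.eq_empty_iff_forall_notMem] at h ⊢
      intro s hs
      rw [Finset.mem_inter] at hs
      refine h s (Finset.mem_inter.2 ⟨hs.1, ?_⟩)
      rw [hC₁]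
      simp only [Finset.mem_filter, Finset.mem_univ, true_and]
      exact ⟨j, i, hj, hs.2, hs.1⟩
    · intro h
      rw [Finset.eq_empty_iff_forall_notMem]
      intro s hs
      rw [Finset.mem_inter, hC₁] at hs
      simp only [Finset.mem_filter, Finset.mem_univ, true_and] at hs
      obtain ⟨hi, j, k, hjk, hj, hk⟩ := hs
      by_cases hji : j = i
      · have := h k (fun hki => hjk (hji.trans hki.symm))
        have hmem : s ∈ J i ∩ J k := Finset.mem_inter.2 ⟨hi, hk⟩
        simp [this] at hmem
      · have := h j hji
        have hmem : s ∈ J i ∩ J j := Finset.mem_inter.2 ⟨hi, hj⟩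
        simp [this] at hmem
  have hTcard : T.card = Sg + 2 * C₂.card + C₃.card := by
    rw [hT, Finset.card_union_of_disjoint, Finset.card_biUnion]
    · rw [Finset.sum_congr rfl (fun i _ => card_pair_sdiff (J i) C₁ (a i) (b i) (haJ i) (hbJ i)
        (hab i) (hK1 i) (hK2 i)), Finset.sum_add_distrib, ← Finset.mul_sum,
        ← Finset.card_filter, ← Finset.card_filter, ← hSg]
      have : (Finset.univ.filter fun i => J i ∩ C₁ = ∅) = C₂ := by
        ext i; simp [hC2' i]
      rw [this]; ring
    · intro i _ j _ hij
      rw [Function.onFun, Finset.disjoint_left]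
      intro s hi hj
      exact hij (huniq i j s (hpJ i s hi).1 (hpJ j s hj).1 (hpJ i s hi).2)
    · rw [Finset.disjoint_left]
      intro s hs hs'
      rw [hC₃] at hs
      simp only [Finset.mem_filter, Finset.mem_univ, true_and] at hs
      obtain ⟨i, _, hi⟩ := Finset.mem_biUnion.1 hs'
      exact hs i (hpJ i s hi).1
  -- the linear equivalence
  set E : Submodule ℂ (C₁ → ℂ) :=
    ⨅ i ∈ Q, DD (fun s : ↥C₁ => l s.1) (Finset.subtype (· ∈ C₁) (J i ∩ C₁)) with hE
  set W : Submodule ℂ (Fin n → ℂ) := ⨅ i, DD l (J i) with hW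
  have hmE : ∀ z : C₁ → ℂ, z ∈ E ↔ ∀ i, 3 ≤ (J i ∩ C₁).card →
      ∃ y, ∀ s : C₁, s.1 ∈ J i → z s = l s.1 y := by
    intro z
    simp [hE, Submodule.mem_iInf, mem_DD, hQ]
  have hmW : ∀ x : Fin n → ℂ, x ∈ W ↔ ∀ i, ∃ y, ∀ s ∈ J i, x s = l s y := by
    intro x
    simp [hW, Submodule.mem_iInf, mem_DD]
  let F : (Fin n → ℂ) →ₗ[ℂ] (C₁ → ℂ) := LinearMap.funLeft ℂ ℂ (fun s : C₁ => s.1)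
  let G : (Fin n → ℂ) →ₗ[ℂ] (T → ℂ) := LinearMap.funLeft ℂ ℂ (fun s : T => s.1)
  have hFW : ∀ x : W, (F.comp W.subtype) x ∈ E := by
    rintro ⟨x, hx⟩
    rw [hmE]
    intro i _
    obtain ⟨y, hy⟩ := (hmW x).1 hx i
    exact ⟨y, fun s hs => hy s.1 hs⟩
  let Φ : W →ₗ[ℂ] E × (T → ℂ) :=
    ((F.comp W.subtype).codRestrict E hFW).prod (G.comp W.subtype)
  have hΦ1 : ∀ (x : W) (s : C₁), ((Φ x).1 : C₁ → ℂ) s = x.1 s.1 := fun x s => rfl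
  have hΦ2 : ∀ (x : W) (s : T), (Φ x).2 s = x.1 s.1 := fun x s => rfl
  have habT : ∀ i s, (s = a i ∨ s = b i) → s ∉ C₁ → s ∈ T := by
    intro i s hs hsC
    rw [hT, Finset.mem_union]
    right
    rw [Finset.mem_biUnion]
    exact ⟨i, Finset.mem_univ _, by simp [hs, hsC]⟩
  have hinj : Function.Injective Φ := by
    intro x x' hxx
    have h1 : ∀ s ∈ C₁, x.1 s = x'.1 s := by
      intro s hs
      rw [← hΦ1 x ⟨s, hs⟩, hxx, hΦ1]
    have h2 : ∀ s ∈ T, x.1 s = x'.1 s := by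
      intro s hs
      rw [← hΦ2 x ⟨s, hs⟩, hxx, hΦ2]
    have h3 : ∀ i s, (s = a i ∨ s = b i) → x.1 s = x'.1 s := by
      intro i s hs
      by_cases hsC : s ∈ C₁
      · exact h1 s hsC
      · exact h2 s (habT i s hs hsC)
    apply Subtype.ext
    funext s
    by_cases hs : ∃ i, s ∈ J i
    · obtain ⟨i, hi⟩ := hs
      obtain ⟨y, hy⟩ := (hmW x.1).1 x.2 i
      obtain ⟨y', hy'⟩ := (hmW x'.1).1 x'.2 i
      have : y = y' := by
        apply pair_inj _ _ (hgen (a i) (b i) (hab i))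
        · rw [← hy _ (haJ i), ← hy' _ (haJ i)]; exact h3 i _ (Or.inl rfl)
        · rw [← hy _ (hbJ i), ← hy' _ (hbJ i)]; exact h3 i _ (Or.inr rfl)
      rw [hy s hi, hy' s hi, this]
    · push Not at hs
      apply h2
      rw [hT, Finset.mem_union, hC₃]
      left
      simpa using hs
  have hsurj : Function.Surjective Φ := by
    rintro ⟨⟨e, he⟩, f⟩
    let z : Fin n → ℂ := fun s =>
      if h : s ∈ C₁ then e ⟨s, h⟩ else if h' : s ∈ T then f ⟨s, h'⟩ else 0
    have hz1 : ∀ s (h : s ∈ C₁), z s = e ⟨s, h⟩ := by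
      intro s h; simp [z, h]
    have hz2 : ∀ s (h : s ∈ T), z s = f ⟨s, h⟩ := by
      intro s h
      have := ((hmT s).1 h).1
      simp [z, h, this]
    choose y hya hyb using fun i =>
      pair_surj _ _ (hgen (a i) (b i) (hab i)) (z (a i)) (z (b i))
    let x : Fin n → ℂ := fun s =>
      if h : ∃ i, s ∈ J i ∧ s ∉ C₁ then l s (y h.choose) else z s
    have hx1 : ∀ i s, s ∈ J i → s ∉ C₁ → x s = l s (y i) := by
      intro i s hi hs
      have h : ∃ i, s ∈ J i ∧ s ∉ C₁ := ⟨i, hi, hs⟩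
      have : h.choose = i := huniq _ _ s h.choose_spec.1 hi hs
      simp only [x]
      rw [dif_pos h, this]
    have hx2 : ∀ s, s ∈ C₁ → x s = z s := by
      intro s hs
      simp only [x]
      rw [dif_neg]
      rintro ⟨i, _, h⟩
      exact h hs
    have hyab : ∀ i s, (s = a i ∨ s = b i) → z s = l s (y i) := by
      rintro i s (rfl | rfl)
      exacts [(hya i).symm, (hyb i).symm]
    have hx3 : ∀ s, s ∈ T → x s = z s := by
      intro s hs
      obtain ⟨hsC, hs'⟩ := (hmT s).1 hs
      by_cases h : ∃ i, s ∈ J i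
      · obtain ⟨i, hi⟩ := h
        rw [hx1 i s hi hsC, hyab i s (hs' i hi)]
      · simp only [x]
        rw [dif_neg]
        rintro ⟨i, hi, _⟩
        exact h ⟨i, hi⟩
    have hxW : x ∈ W := by
      rw [hmW]
      intro i
      refine ⟨y i, fun s hs => ?_⟩
      by_cases hsC : s ∈ C₁
      · rw [hx2 s hsC]
        rcases Nat.lt_or_ge 2 (J i ∩ C₁).card with h | h
        · obtain ⟨w, hw⟩ := (hmE e).1 he i h
          obtain ⟨haC, hbC⟩ := hK2 i (by omega)
          have : y i = w := by
            apply pair_inj _ _ (hgen (a i) (b i) (hab i))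
            · rw [hya, hz1 _ haC]; exact hw ⟨a i, haC⟩ (haJ i)
            · rw [hyb, hz1 _ hbC]; exact hw ⟨b i, hbC⟩ (hbJ i)
          rw [this, hz1 s hsC]
          exact hw ⟨s, hsC⟩ hs
        · exact hyab i s (hK1 i h s hs hsC)
      · exact hx1 i s hs hsC
    refine ⟨⟨x, hxW⟩, Prod.ext (Subtype.ext (funext fun s => ?_)) (funext fun s => ?_)⟩
    · rw [hΦ1]
      exact (hx2 s.1 s.2).trans (hz1 s.1 s.2)
    · rw [hΦ2]
      exact (hx3 s.1 s.2).trans (hz2 s.1 s.2)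
  rw [(LinearEquiv.ofBijective Φ ⟨hinj, hsurj⟩).finrank_eq, Module.finrank_prod, ← hd,
    Module.finrank_fintype_fun_eq_card, Fintype.card_coe, hTcard]
  ring
end
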